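/- In the PP-a setup, assume additionally that ω̃_n ≤ 1 and that the total weight of all n items is at least 1 (equivalently, Σ_{j critical} w_j ≥ 1 − ω̃_n), so that the offline optimum equals OPT = Σ_{j high} v_j w_j + v̂·(1 − ω̃_n). Then OPT ≤ (1 + ω̂_n)·Σ_{j=1}^n v_j x_j, where ω̂_n = min(Σ_{j critical} w_j, 1) = min(1, ω̂). That is, PP-a is (1 + min{1, ω̂})-competitive for online fractional knapsack given a correct point prediction of the critical value. -/

import Mathlib

open Finset

/-!
Write `P i` for the profit after `i` items and `A i` for the value of the high items among them.
PP-a maintains the invariant `A i + v̂ * ω̂ i ≤ (1 + ω̂ i) * P i`. A high item adds `v w` to both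
sides. A critical item that increases `ω̂` by `m` adds `v̂ * m` to the left side and
`m * P + v̂ * (1 - s) * m` to the right side, which is at least as much because every unit of
capacity used so far has earned at least `v̂`, that is, `v̂ * s ≤ P`. Finally, the items fill the
knapsack, so the capacity `1 - ω̃` left over by the high items is at most `ω̂`.
-/

theorem min_add_min_sub_min {α : Type*} [AddCommGroup α] [LinearOrder α] [IsOrderedAddMonoid α]
    (a c : α) {b : α} (hb : 0 ≤ b) : min a c + min b (c - min a c) = min (a + b) c := by
  rw [← min_add_add_left, add_sub_cancel, ← min_add_add_right, min_assoc,
    min_eq_right (le_add_of_nonneg_right hb)]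

section PPa

variable {K : Type*} [Field K] [LinearOrder K]

/-- The first `n` steps of the algorithm PP-a on items of weights `w`, where `high i` records
whether item `i` is high or critical. Items are indexed from `0`: item `i` is packed to the extent
`x i`, and `ωhat i`, `s i` are the truncated critical weight and the used capacity just before it
arrives. Unit values do not enter, since PP-a only sees whether an item is high. -/
structure IsPPaRun (n : ℕ) (w : ℕ → K) (high : ℕ → Bool) (ωhat s x : ℕ → K) : Prop where
  ωhat_zero : ωhat 0 = 0
  s_zero : s 0 = 0
  of_high : ∀ i < n, high i = true → ωhat (i + 1) = ωhat i ∧ x i = w i / (1 + ωhat i)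
  of_critical : ∀ i < n, high i = false →
    ωhat (i + 1) = ωhat i + min (w i) (1 - ωhat i) ∧
    x i = (1 - s i) * min (w i) (1 - ωhat i) / (1 + ωhat (i + 1))
  s_succ : ∀ i < n, s (i + 1) = s i + x i

namespace IsPPaRun

variable {n : ℕ} {w v ωhat s x : ℕ → K} {high : ℕ → Bool} {vhat : K} {i : ℕ}

theorem s_eq_sum (h : IsPPaRun n w high ωhat s x) (hi : i ≤ n) : s i = ∑ j ∈ range i, x j := by
  induction i with
  | zero => simp [h.s_zero]
  | succ i ih => rw [h.s_succ i hi, sum_range_succ, ih (Nat.le_of_succ_le hi)]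

variable [IsStrictOrderedRing K]

theorem ωhat_eq_min_sum_critical (h : IsPPaRun n w high ωhat s x) (hw : ∀ i < n, 0 ≤ w i)
    (hi : i ≤ n) : ωhat i = min (∑ j ∈ range i with high j = false, w j) 1 := by
  induction i with
  | zero => simp [h.ωhat_zero]
  | succ i ih =>
    specialize ih (Nat.le_of_succ_le hi)
    rw [sum_filter, sum_range_succ, ← sum_filter]
    cases hitem : high i with
    | true => simpa [(h.of_high i hi hitem).1] using ih
    | false =>
      rw [(h.of_critical i hi hitem).1, ih, if_pos rfl]
      exact min_add_min_sub_min _ _ (hw i hi)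

theorem ωhat_le_one (h : IsPPaRun n w high ωhat s x) (hw : ∀ i < n, 0 ≤ w i) (hi : i ≤ n) :
    ωhat i ≤ 1 :=
  (h.ωhat_eq_min_sum_critical hw hi).trans_le (min_le_right _ _)

theorem ωhat_nonneg (h : IsPPaRun n w high ωhat s x) (hw : ∀ i < n, 0 ≤ w i) (hi : i ≤ n) :
    0 ≤ ωhat i := by
  rw [h.ωhat_eq_min_sum_critical hw hi]
  refine le_min (sum_nonneg fun j hj => hw j ?_) zero_le_one
  exact (mem_range.1 (mem_filter.1 hj).1).trans_le hi

theorem one_add_ωhat_pos (h : IsPPaRun n w high ωhat s x) (hw : ∀ i < n, 0 ≤ w i) (hi : i ≤ n) :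
    0 < 1 + ωhat i :=
  add_pos_of_pos_of_nonneg one_pos (h.ωhat_nonneg hw hi)

theorem mul_s_le_sum_profit (h : IsPPaRun n w high ωhat s x) (hw : ∀ i < n, 0 ≤ w i)
    (hv : ∀ i < n, (high i = true → vhat ≤ v i) ∧ (high i = false → v i = vhat)) (hi : i ≤ n) :
    vhat * s i ≤ ∑ j ∈ range i, v j * x j := by
  rw [h.s_eq_sum hi, mul_sum]
  refine sum_le_sum fun j hj => ?_
  have hjn : j < n := (mem_range.1 hj).trans_le hi
  cases hitem : high j with
  | true =>
    have hx : 0 ≤ x j := by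
      rw [(h.of_high j hjn hitem).2]
      exact div_nonneg (hw j hjn) (h.one_add_ωhat_pos hw hjn.le).le
    exact mul_le_mul_of_nonneg_right ((hv j hjn).1 hitem) hx
  | false => rw [(hv j hjn).2 hitem]

theorem sum_high_value_add_mul_ωhat_le (h : IsPPaRun n w high ωhat s x) (hw : ∀ i < n, 0 ≤ w i)
    (hv : ∀ i < n, (high i = true → vhat ≤ v i) ∧ (high i = false → v i = vhat)) (hi : i ≤ n) :
    (∑ j ∈ range i with high j = true, v j * w j) + vhat * ωhat i
      ≤ (1 + ωhat i) * ∑ j ∈ range i, v j * x j := by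
  induction i with
  | zero => simp [h.ωhat_zero]
  | succ i ih =>
    have hin : i ≤ n := Nat.le_of_succ_le hi
    specialize ih hin
    rw [sum_filter, sum_range_succ, ← sum_filter, sum_range_succ]
    set A := ∑ j ∈ range i with high j = true, v j * w j
    set P := ∑ j ∈ range i, v j * x j
    cases hitem : high i with
    | true =>
      obtain ⟨hω, hx⟩ := h.of_high i hi hitem
      have hmul : (1 + ωhat i) * x i = w i := by
        rw [hx, mul_div_cancel₀ _ (h.one_add_ωhat_pos hw hin).ne']
      rw [hω, if_pos rfl]
      linear_combination ih - v i * hmul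
    | false =>
      obtain ⟨hω, hx⟩ := h.of_critical i hi hitem
      set m := min (w i) (1 - ωhat i)
      have hm : 0 ≤ m := le_min (hw i hi) (sub_nonneg.2 (h.ωhat_le_one hw hin))
      have hmul : (1 + ωhat (i + 1)) * x i = (1 - s i) * m := by
        rw [hx, mul_div_cancel₀ _ (h.one_add_ωhat_pos hw hi).ne']
      have hearned : m * (vhat * s i) ≤ m * P :=
        mul_le_mul_of_nonneg_left (h.mul_s_le_sum_profit hw hv hin) hm
      rw [if_neg Bool.false_ne_true, add_zero, (hv i hi).2 hitem]
      calc A + vhat * ωhat (i + 1)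
          = A + vhat * ωhat i + vhat * m := by rw [hω]; ring
        _ ≤ (1 + ωhat i) * P + m * P + vhat * ((1 - s i) * m) := by
            linear_combination ih + hearned
        _ = (1 + ωhat (i + 1)) * (P + vhat * x i) := by rw [← hmul, hω]; ring

theorem one_sub_sum_high_le_ωhat (h : IsPPaRun n w high ωhat s x) (hw : ∀ i < n, 0 ≤ w i)
    (htotal : 1 - (∑ j ∈ range n with high j = true, w j)
      ≤ ∑ j ∈ range n with high j = false, w j) :
    1 - (∑ j ∈ range n with high j = true, w j) ≤ ωhat n := by
  rw [h.ωhat_eq_min_sum_critical hw le_rfl]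
  refine le_min htotal (sub_le_self _ (sum_nonneg fun j hj => hw j ?_))
  exact mem_range.1 (mem_filter.1 hj).1

end IsPPaRun

theorem stmt4_general [IsStrictOrderedRing K] {n : ℕ} {w v ωhat s x : ℕ → K} {high : ℕ → Bool}
    {vhat : K} (h : IsPPaRun n w high ωhat s x) (hvhat : 0 ≤ vhat) (hw : ∀ i < n, 0 ≤ w i)
    (hv : ∀ i < n, (high i = true → vhat ≤ v i) ∧ (high i = false → v i = vhat))
    (htotal : 1 - (∑ j ∈ range n with high j = true, w j)
      ≤ ∑ j ∈ range n with high j = false, w j) :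
    ωhat n = min (∑ j ∈ range n with high j = false, w j) 1 ∧
    (∑ j ∈ range n with high j = true, v j * w j)
        + vhat * (1 - ∑ j ∈ range n with high j = true, w j)
      ≤ (1 + ωhat n) * ∑ j ∈ range n, v j * x j := by
  refine ⟨h.ωhat_eq_min_sum_critical hw le_rfl, ?_⟩
  calc _ ≤ (∑ j ∈ range n with high j = true, v j * w j) + vhat * ωhat n := by
        gcongr
        exact h.one_sub_sum_high_le_ωhat hw htotal
    _ ≤ _ := h.sum_high_value_add_mul_ωhat_le hw hv le_rfl

end PPa

/-- PP-a is `(1 + min 1 ω̂)`-competitive for online fractional knapsack given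
a correct point prediction of the critical value: under the stated conditions
the offline optimum `Σ_{high} v w + v̂ (1 - ω̃ n)` is at most
`(1 + ω̂ n)` times PP-a's profit, where `ω̂ n = min (Σ_{critical} w) 1`. -/
theorem stmt4 (n : ℕ) (w v : ℕ → ℝ) (high : ℕ → Bool) (vhat : ℝ) (hvhat : 0 < vhat)
    (hw : ∀ i < n, 0 ≤ w i)
    (hv : ∀ i < n, (high i = true → vhat < v i) ∧ (high i = false → v i = vhat))
    (ωhat s x ωtilde : ℕ → ℝ)
    (hω0 : ωhat 0 = 0) (hs0 : s 0 = 0)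
    (hhigh : ∀ i < n, high i = true →
      ωhat (i + 1) = ωhat i ∧ x i = w i / (1 + ωhat i))
    (hcrit : ∀ i < n, high i = false →
      ωhat (i + 1) = ωhat i + min (w i) (1 - ωhat i) ∧
      x i = (1 - s i) * min (w i) (1 - ωhat i) / (1 + ωhat (i + 1)))
    (hs : ∀ i < n, s (i + 1) = s i + x i)
    (hωt : ∀ i, ωtilde i = ∑ j ∈ (Finset.range i).filter (fun j => high j = true), w j)
    (hhigh1 : ωtilde n ≤ 1)
    (htotal : 1 - ωtilde n ≤ ∑ j ∈ (Finset.range n).filter (fun j => high j = false), w j) :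
    ωhat n = min (∑ j ∈ (Finset.range n).filter (fun j => high j = false), w j) 1 ∧
    (∑ j ∈ (Finset.range n).filter (fun j => high j = true), v j * w j)
        + vhat * (1 - ωtilde n)
      ≤ (1 + ωhat n) * ∑ j ∈ Finset.range n, v j * x j := by
  rw [hωt] at htotal ⊢
  exact stmt4_general ⟨hω0, hs0, hhigh, hcrit, hs⟩ hvhat.le hw
    (fun i hi => (hv i hi).imp_left fun hgt hitem => (hgt hitem).le) htotal
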